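/- arXiv:2210.04669 — 5 statements merged into one kernel-verified Lean document; each statement's English description precedes it below -/
import Mathlib

section
/- Let G be a finite simple graph, U a stable subset of V(G), and α_v (v ∈ U) non-negative integers. Then the condition '∑_{v∈S} α_v ≤ |S| + |N(S)| − 1 for every non-empty S ⊆ U' is equivalent to the condition '∑_{v∈S} α_v ≤ |V(G)| − ω_G(δ_G(S)) for every non-empty S ⊆ U'. -/
/-!
Fix a non-empty `S ⊆ U` and let `H` be the graph on `V` whose edges are the cut `δ(S)`.

If the cut condition holds, it suffices that `H` has at least `|V| - |S| - |N(S)| + 1` components.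
This is so because every vertex outside `S ∪ N(S)` is isolated in `H`, and any vertex of `S` lies in
one further component (`card_add_one_le_omegaE`).

Conversely, assume the neighbourhood condition. For each component `C` of `H`, the set `C` contains
`S ∩ C` and, because `S` is stable, also `N(S ∩ C)`. Hence the neighbourhood condition for `S ∩ C`
gives `∑ v ∈ S ∩ C, α v + 1 ≤ |C|`; when `S ∩ C` is empty this only says that `C` is non-empty.
Summing over all components yields `∑ v ∈ S, α v + ω(δ(S)) ≤ |V|`.
-/

open SimpleGraph

/-- The set of edges of `G` with exactly one endpoint in `S`. -/
def cutSet {V : Type*} (G : SimpleGraph V) (S : Set V) : Set (Sym2 V) :=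
  {e ∈ G.edgeSet | ∃ u v, e = s(u, v) ∧ u ∈ S ∧ v ∉ S}

/-- The number of connected components of the graph with vertex set `V` and edge set `X`. -/
noncomputable def omegaE {V : Type*} (X : Set (Sym2 V)) : ℕ :=
  Nat.card (SimpleGraph.fromEdgeSet X).ConnectedComponent

/-- The neighbourhood `N(S)`: the vertices outside `S` with a neighbour in `S`. -/
abbrev nbhd {V : Type*} (G : SimpleGraph V) (S : Finset V) : Set V :=
  {v : V | v ∉ S ∧ ∃ u ∈ S, G.Adj u v}

/-- A vertex outside `S ∪ N(S)` is isolated in the graph with edge set `δ(S)`. -/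
lemma not_adj_cut {V : Type*} (G : SimpleGraph V) (S : Finset V) {x y : V}
    (hx : x ∉ S) (hx' : x ∉ nbhd G S) :
    ¬ (SimpleGraph.fromEdgeSet (cutSet G (↑S : Set V))).Adj x y := by
  intro h
  rw [SimpleGraph.fromEdgeSet_adj] at h
  obtain ⟨⟨hE, u, v, he, hu, -⟩, -⟩ := h
  rw [SimpleGraph.mem_edgeSet] at hE
  rcases Sym2.eq_iff.1 he with ⟨rfl, rfl⟩ | ⟨rfl, rfl⟩
  · exact hx (by simpa using hu)
  · exact hx' ⟨hx, _, by simpa using hu, hE.symm⟩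

lemma eq_of_reachable_cut {V : Type*} (G : SimpleGraph V) (S : Finset V) {x y : V}
    (hx : x ∉ S) (hx' : x ∉ nbhd G S)
    (h : (SimpleGraph.fromEdgeSet (cutSet G (↑S : Set V))).Reachable x y) : x = y := by
  obtain ⟨p⟩ := h
  cases p with
  | nil => rfl
  | cons hadj _ => exact absurd hadj (not_adj_cut G S hx hx')

/-- The vertices outside `S ∪ N(S)` together with one vertex of `S` lie in pairwise distinct
components of the graph with edge set `δ(S)`. -/
lemma card_add_one_le_omegaE {V : Type*} [Fintype V] [DecidableEq V] (G : SimpleGraph V)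
    (S : Finset V) (hS : S.Nonempty) :
    Fintype.card V + 1 ≤ omegaE (cutSet G (↑S : Set V)) + S.card + (nbhd G S).ncard := by
  classical
  obtain ⟨s, hs⟩ := hS
  set H := SimpleGraph.fromEdgeSet (cutSet G (↑S : Set V)) with hH
  set N : Finset V := (nbhd G S).toFinset with hN
  have hNc : (nbhd G S).ncard = N.card := Set.ncard_eq_toFinset_card' _
  have hmem : ∀ x, x ∈ (S ∪ N)ᶜ ↔ x ∉ S ∧ x ∉ nbhd G S := by
    intro x
    simp only [Finset.mem_compl, Finset.mem_union, hN, Set.mem_toFinset, not_or]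
  have hsT : s ∉ (S ∪ N)ᶜ := fun h => ((hmem s).1 h).1 hs
  have hinj : Set.InjOn H.connectedComponentMk (↑(insert s (S ∪ N)ᶜ) : Set V) := by
    intro x hx y hy hxy
    have hr : H.Reachable x y := SimpleGraph.ConnectedComponent.exact hxy
    rcases Finset.mem_insert.1 (Finset.mem_coe.1 hx) with rfl | hx
    · rcases Finset.mem_insert.1 (Finset.mem_coe.1 hy) with rfl | hy
      · rfl
      · exact (eq_of_reachable_cut G S ((hmem y).1 hy).1 ((hmem y).1 hy).2 hr.symm).symm
    · exact eq_of_reachable_cut G S ((hmem x).1 hx).1 ((hmem x).1 hx).2 hr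
  have hle : (insert s (S ∪ N)ᶜ).card ≤ omegaE (cutSet G (↑S : Set V)) := by
    rw [← Finset.card_image_of_injOn hinj, omegaE, Nat.card_eq_fintype_card]
    exact Finset.card_le_univ _
  rw [Finset.card_insert_of_notMem hsT, Finset.card_compl] at hle
  have h1 := Finset.card_union_le S N
  omega

/-- The counting step: the neighbourhood condition on all subsets of a stable set bounds
`∑ v ∈ C ∩ S, α v + 1` by `|C|` for each component `C`, and these bounds add up. -/
lemma sum_add_omegaE_le {V : Type*} [Fintype V] [DecidableEq V] (G : SimpleGraph V)
    (S : Finset V) (hS : ∀ u ∈ S, ∀ v ∈ S, ¬ G.Adj u v) (α : V → ℕ)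
    (h : ∀ T ⊆ S, T.Nonempty → ∑ v ∈ T, α v ≤ T.card + (nbhd G T).ncard - 1) :
    ∑ v ∈ S, α v + omegaE (cutSet G (↑S : Set V)) ≤ Fintype.card V := by
  classical
  set H := SimpleGraph.fromEdgeSet (cutSet G (↑S : Set V)) with hH
  have key : ∀ C : H.ConnectedComponent,
      ∑ v ∈ S with H.connectedComponentMk v = C, α v + 1 ≤
        (Finset.univ.filter fun v => H.connectedComponentMk v = C).card := by
    intro C
    set T := S.filter fun v => H.connectedComponentMk v = C with hT
    set D := Finset.univ.filter fun v => H.connectedComponentMk v = C with hD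
    rcases T.eq_empty_or_nonempty with h0 | hne
    · rw [h0, Finset.sum_empty, zero_add, Nat.one_le_iff_ne_zero, ← Nat.pos_iff_ne_zero,
        Finset.card_pos]
      obtain ⟨v, hv⟩ := C.exists_rep
      exact ⟨v, Finset.mem_filter.2 ⟨Finset.mem_univ _, hv⟩⟩
    · have hb := h T (Finset.filter_subset _ _) hne
      have hpos := hne.card_pos
      set N : Finset V := (nbhd G T).toFinset with hN
      have hNc : (nbhd G T).ncard = N.card := Set.ncard_eq_toFinset_card' _
      have hdisj : Disjoint T N := by
        rw [Finset.disjoint_left]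
        intro x hx hxN
        exact (Set.mem_toFinset.1 hxN).1 hx
      have hsub : T ∪ N ⊆ D := by
        intro x hx
        rw [hD, Finset.mem_filter]
        refine ⟨Finset.mem_univ _, ?_⟩
        rcases Finset.mem_union.1 hx with hx | hx
        · exact (Finset.mem_filter.1 hx).2
        · obtain ⟨-, u, hu, hux⟩ := Set.mem_toFinset.1 hx
          obtain ⟨huS, huC⟩ := Finset.mem_filter.1 hu
          -- Stability puts `x` outside `S`, so `ux` is an edge of the cut.
          have hxS : x ∉ S := fun hxS => hS u huS x hxS hux
          have hadj : H.Adj u x := by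
            rw [hH, SimpleGraph.fromEdgeSet_adj]
            exact ⟨⟨hux, u, x, rfl, by simpa using huS, by simpa using hxS⟩, hux.ne⟩
          rw [← huC]
          exact SimpleGraph.ConnectedComponent.sound hadj.symm.reachable
      have hc := Finset.card_le_card hsub
      rw [Finset.card_union_of_disjoint hdisj] at hc
      omega
  have hsum := Finset.sum_le_sum fun C (_ : C ∈ (Finset.univ : Finset H.ConnectedComponent)) =>
    key C
  have h1 : ∑ C, ∑ v ∈ S with H.connectedComponentMk v = C, α v = ∑ v ∈ S, α v := by
    convert Finset.sum_fiberwise S H.connectedComponentMk α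
  have h2 : ∑ C, (Finset.univ.filter fun v => H.connectedComponentMk v = C).card =
      Fintype.card V := by
    rw [← Finset.card_univ, Finset.card_eq_sum_card_fiberwise (f := H.connectedComponentMk)
      (t := Finset.univ) (fun _ _ => Finset.mem_coe.2 (Finset.mem_univ _))]
  rw [Finset.sum_add_distrib, h1, h2, Finset.sum_const, smul_eq_mul, mul_one,
    Finset.card_univ] at hsum
  rwa [omegaE, Nat.card_eq_fintype_card]

theorem stmt_4 {V : Type*} [Fintype V] [DecidableEq V] (G : SimpleGraph V)
    (U : Finset V) (hU : ∀ u ∈ U, ∀ v ∈ U, ¬ G.Adj u v) (α : V → ℕ) :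
    (∀ S ⊆ U, S.Nonempty →
        ∑ v ∈ S, α v ≤ S.card + ({v : V | v ∉ S ∧ ∃ u ∈ S, G.Adj u v}).ncard - 1) ↔
      (∀ S ⊆ U, S.Nonempty →
        ∑ v ∈ S, α v ≤ Fintype.card V - omegaE (cutSet G (↑S : Set V))) := by
  constructor
  · intro h S hSU _
    have := sum_add_omegaE_le G S (fun u hu v hv => hU u (hSU hu) v (hSU hv)) α
      (fun T hT => h T (hT.trans hSU))
    omega
  · intro h S hSU hne
    have h1 := h S hSU hne
    have h2 : Fintype.card V + 1 ≤ omegaE (cutSet G (↑S : Set V)) + S.card +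
        ({v : V | v ∉ S ∧ ∃ u ∈ S, G.Adj u v}).ncard := card_add_one_le_omegaE G S hne
    omega
end

section
/- Let M₁ and M₂ be finite matroids on a common ground set E with rank functions r₁ and r₂, and let μ be a positive integer. Then there exists a set I ⊆ E with |I| = μ that is independent in both M₁ and M₂ if and only if r₁(X) + r₂(E∖X) ≥ μ for every X ⊆ E. -/
/-!
This is Edmonds' matroid intersection theorem. Necessity splits a common independent set `I` as
`(I ∩ X) ∪ (I \ X)`. Sufficiency is proved for all subsets `S`, by induction on `|S|`
(`exists_common_indep`). If every element of `S` is dependent in one of the matroids, taking for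
`X` the elements that are dependent in `M₁` gives `r₁ X + r₂ (S \ X) = 0`. Otherwise let `e ∈ S` be
independent in both. If neither deleting `e` nor contracting it (with `μ` lowered by one) yields the
common independent set, the two failing sets `A, B ⊆ S \ {e}` satisfy
`r₁ A + r₂ (S \ {e} \ A) ≤ μ - 1` and `r₁ (B ∪ {e}) + r₂ (S \ B) ≤ μ`. Submodularity
(`matroidRank_submod`) then bounds the sum of the values of `r₁ X + r₂ (S \ X)` at `X = A ∩ B` and
`X = A ∪ B ∪ {e}` by `2 μ - 1`, so one of the two is smaller than `μ`.
-/

/-- The rank of a set `X` in a matroid `M`: the maximum cardinality of an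
independent subset of `X`. -/
noncomputable def matroidRank {α : Type*} (M : Matroid α) (X : Set α) : ℕ :=
  sSup {n : ℕ | ∃ I, I ⊆ X ∧ M.Indep I ∧ I.ncard = n}

open Set
open scoped Matroid

/-- On finite sets `matroidRank` is Mathlib's `eRk`; finiteness ensures that the supremum of natural
numbers is attained. -/
lemma cast_matroidRank {α : Type*} (M : Matroid α) {X : Set α} (hX : X.Finite) :
    (matroidRank M X : ℕ∞) = M.eRk X := by
  have hbdd : BddAbove {n : ℕ | ∃ I, I ⊆ X ∧ M.Indep I ∧ I.ncard = n} := by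
    refine ⟨X.ncard, ?_⟩
    rintro n ⟨I, hIX, -, rfl⟩
    exact ncard_le_ncard hIX hX
  apply le_antisymm
  · obtain ⟨I, hIX, hI, hn⟩ :=
      Nat.sSup_mem (s := {n : ℕ | ∃ I, I ⊆ X ∧ M.Indep I ∧ I.ncard = n})
        ⟨0, ∅, empty_subset _, M.empty_indep, ncard_empty _⟩ hbdd
    rw [matroidRank, ← hn, (hX.subset hIX).cast_ncard_eq]
    exact hI.encard_le_eRk_of_subset hIX
  · rw [Matroid.eRk_le_iff]
    intro I hIX hI
    rw [← (hX.subset hIX).cast_ncard_eq]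
    exact_mod_cast le_csSup hbdd ⟨I, hIX, hI, rfl⟩

lemma Matroid.Indep.ncard_le_matroidRank {α : Type*} {M : Matroid α} {I X : Set α}
    (hI : M.Indep I) (hIX : I ⊆ X) (hX : X.Finite) : I.ncard ≤ matroidRank M X := by
  have h := hI.encard_le_eRk_of_subset hIX
  rw [← cast_matroidRank M hX, ← (hX.subset hIX).cast_ncard_eq] at h
  exact_mod_cast h

lemma matroidRank_submod {α : Type*} (M : Matroid α) {X Y : Set α} (hX : X.Finite)
    (hY : Y.Finite) :
    matroidRank M (X ∩ Y) + matroidRank M (X ∪ Y) ≤ matroidRank M X + matroidRank M Y := by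
  have h := M.eRk_inter_add_eRk_union_le X Y
  rw [← cast_matroidRank M hX, ← cast_matroidRank M hY, ← cast_matroidRank M (hX.union hY),
    ← cast_matroidRank M (hX.inter_of_left Y)] at h
  exact_mod_cast h

lemma matroidRank_eq_zero {α : Type*} {M : Matroid α} {X : Set α} (hX : X.Finite)
    (h : ∀ e ∈ X, ¬ M.Indep {e}) : matroidRank M X = 0 := by
  have h0 : M.eRk X ≤ 0 := by
    rw [Matroid.eRk_le_iff]
    intro I hIX hI
    rw [nonpos_iff_eq_zero, encard_eq_zero, eq_empty_iff_forall_notMem]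
    exact fun e he ↦ h e (hIX he) (hI.subset (singleton_subset_iff.2 he))
  rw [← cast_matroidRank M hX] at h0
  exact_mod_cast nonpos_iff_eq_zero.1 h0

/-- Contracting an independent element `e` lowers the rank by at most one: a basis of `X ∪ {e}`
that contains `e` leaves, once `e` is removed, an independent set of the contraction. -/
lemma matroidRank_insert_le {α : Type*} {M : Matroid α} {X : Set α} {e : α} (hX : X.Finite)
    (he : M.Indep {e}) :
    matroidRank M (insert e X) ≤ matroidRank (M ／ {e}) X + 1 := by
  obtain ⟨J, hJ, heJ⟩ := he.subset_isBasis'_of_subset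
    (singleton_subset_iff.2 (mem_insert e X))
  rw [singleton_subset_iff] at heJ
  have hJfin : J.Finite := (hX.insert e).subset hJ.subset
  have hJr : J.ncard = matroidRank M (insert e X) := by
    have h := hJ.encard_eq_eRk
    rw [← cast_matroidRank M (hX.insert e), ← hJfin.cast_ncard_eq] at h
    exact_mod_cast h
  have hind : (M ／ {e}).Indep (J \ {e}) := by
    rw [he.contract_indep_iff]
    refine ⟨disjoint_sdiff_left, ?_⟩
    rw [sdiff_union_of_subset (singleton_subset_iff.2 heJ)]
    exact hJ.indep
  have hle := hind.ncard_le_matroidRank (X := X) (by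
    rintro x ⟨hx, hxe⟩
    exact (hJ.subset hx).resolve_left hxe) hX
  have := ncard_sdiff_singleton_add_one heJ hJfin
  omega

/-- Sufficiency of the rank condition, on a finite set `S` that need not be the ground set of either
matroid, so that deletion of an element is just passage to a smaller `S`. -/
lemma exists_common_indep {α : Type*} (n : ℕ) : ∀ (S : Set α), S.Finite → S.ncard = n →
    ∀ (M₁ M₂ : Matroid α) (μ : ℕ),
    (∀ X ⊆ S, μ ≤ matroidRank M₁ X + matroidRank M₂ (S \ X)) →
    ∃ I, I ⊆ S ∧ I.ncard = μ ∧ M₁.Indep I ∧ M₂.Indep I := by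
  induction n with
  | zero =>
    intro S hS hn M₁ M₂ μ h
    obtain rfl := (ncard_eq_zero hS).1 hn
    have h0 := h ∅ subset_rfl
    rw [matroidRank_eq_zero finite_empty (by simp),
      matroidRank_eq_zero (finite_empty.sdiff) (by simp)] at h0
    exact ⟨∅, subset_rfl, by simp; omega, M₁.empty_indep, M₂.empty_indep⟩
  | succ n ih =>
    intro S hS hn M₁ M₂ μ h
    by_cases hex : ∃ e ∈ S, M₁.Indep {e} ∧ M₂.Indep {e}
    · obtain ⟨e, heS, he₁, he₂⟩ := hex
      have hS' : (S \ {e}).Finite := hS.sdiff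
      have hn' : (S \ {e}).ncard = n := by
        have := ncard_sdiff_singleton_add_one heS hS
        omega
      obtain _ | ν := μ
      · exact ⟨∅, empty_subset _, by simp, M₁.empty_indep, M₂.empty_indep⟩
      by_cases hdel : ∀ X ⊆ S \ {e},
          ν + 1 ≤ matroidRank M₁ X + matroidRank M₂ ((S \ {e}) \ X)
      · obtain ⟨I, hI, hrest⟩ := ih _ hS' hn' M₁ M₂ _ hdel
        exact ⟨I, hI.trans sdiff_subset, hrest⟩
      by_cases hcon : ∀ X ⊆ S \ {e},
          ν ≤ matroidRank (M₁ ／ {e}) X + matroidRank (M₂ ／ {e}) ((S \ {e}) \ X)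
      · obtain ⟨I, hI, hIc, hI₁, hI₂⟩ := ih _ hS' hn' _ _ _ hcon
        rw [he₁.contract_indep_iff] at hI₁
        rw [he₂.contract_indep_iff] at hI₂
        have heI : e ∉ I := fun heI ↦ (hI heI).2 rfl
        refine ⟨I ∪ {e}, union_subset (hI.trans sdiff_subset) (singleton_subset_iff.2 heS), ?_,
          hI₁.2, hI₂.2⟩
        rw [union_singleton, ncard_insert_of_notMem heI (hS'.subset hI), hIc]
      push Not at hdel hcon
      obtain ⟨A, hA, hAlt⟩ := hdel
      obtain ⟨B, hB, hBlt⟩ := hcon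
      have hAf := hS'.subset hA
      have hBf := hS'.subset hB
      have c₁ := matroidRank_insert_le hBf he₁
      have c₂ := matroidRank_insert_le (hS'.sdiff (t := B)) he₂
      have s₁ := matroidRank_submod M₁ hAf (hBf.insert e)
      have s₂ := matroidRank_submod M₂ (hS'.sdiff (t := A)) ((hS'.sdiff (t := B)).insert e)
      have t₁ := h (A ∩ insert e B) fun x hx ↦ (hA hx.1).1
      have t₂ := h (A ∪ insert e B) (union_subset (hA.trans sdiff_subset)
        (insert_subset heS (hB.trans sdiff_subset)))
      -- Complements in `S` exchange the union and the intersection, as `e ∉ A` and `e ∉ B`.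
      have e₁ : (S \ {e}) \ A ∪ insert e ((S \ {e}) \ B) = S \ (A ∩ insert e B) := by
        ext x
        have := @hA x
        have := @hB x
        by_cases hx : x = e
        · subst hx; simp_all
        · simp [hx]; tauto
      have e₂ : (S \ {e}) \ A ∩ insert e ((S \ {e}) \ B) = S \ (A ∪ insert e B) := by
        ext x
        by_cases hx : x = e
        · subst hx; simp
        · simp [hx]; tauto
      rw [e₁, e₂] at s₂
      omega
    · push Not at hex
      have h0 := h {e ∈ S | ¬ M₁.Indep {e}} (sep_subset _ _)
      rw [matroidRank_eq_zero (hS.subset (sep_subset _ _)) (fun e he ↦ he.2),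
        matroidRank_eq_zero hS.sdiff (fun e he ↦ hex e he.1
          (by by_contra hc; exact he.2 ⟨he.1, hc⟩))] at h0
      exact ⟨∅, empty_subset _, by simp; omega, M₁.empty_indep, M₂.empty_indep⟩

theorem stmt_5 {α : Type*} (E : Set α) (hE : E.Finite) (M₁ M₂ : Matroid α)
    (h₁ : M₁.E = E) (h₂ : M₂.E = E) (μ : ℕ) (hμ : 0 < μ) :
    (∃ I, I ⊆ E ∧ I.ncard = μ ∧ M₁.Indep I ∧ M₂.Indep I) ↔
      ∀ X ⊆ E, μ ≤ matroidRank M₁ X + matroidRank M₂ (E \ X) := by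
  refine ⟨?_, exists_common_indep _ E hE rfl M₁ M₂ μ⟩
  rintro ⟨I, hIE, rfl, hI₁, hI₂⟩ X hX
  rw [← ncard_inter_add_ncard_sdiff_eq_ncard I X (hE.subset hIE)]
  exact add_le_add
    ((hI₁.subset inter_subset_left).ncard_le_matroidRank inter_subset_right (hE.subset hX))
    ((hI₂.subset sdiff_subset).ncard_le_matroidRank (sdiff_subset_sdiff_left hIE) hE.sdiff)
end

section
/- Let G be a finite simple graph, U a stable subset of V(G), and α_v, β_v (v ∈ U) non-negative integers with α_v ≤ β_v for all v ∈ U. Suppose that ∑_{v∈S} α_v ≤ |S| + |N(S)| − 1 for every non-empty S ⊆ U and ∑_{v∈S} β_v ≥ ω(G−S) + |S| − 1 for every S ⊆ U. Then α_v ≤ min{β_v, d_G(v)} for all v ∈ U, and ∑_{v∈U} α_v ≤ |V(G)| − 1 ≤ ∑_{v∈U} min{β_v, d_G(v)} + |E(G−U)|. -/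
/-!
The first two claims are the hypothesis on `α` for `S = {v}` and for `S = U`.

For the last inequality, apply the hypothesis on `β` to `S = {v ∈ U | β v ≤ d(v)}`. The sum
`∑ v ∈ U, min (β v) (d v)` splits as `∑ v ∈ S, β v + ∑ v ∈ U \ S, d v`. Every edge of `G - S` either
avoids `U` or is incident with a vertex of `U \ S`, so the degree sum over `U \ S` together with
`|E(G - U)|` is at least `|E(G - S)|`. Finally a graph with `c` components and `m` edges has at most
`c + m` vertices (`card_le_components_add_edges`), which for `G - S` gives
`|V| - 1 ≤ (ω(G - S) + |S| - 1) + |E(G - S)|`.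
-/

open SimpleGraph

/-- The set of edges of `G` avoiding all vertices of `S`, i.e. the edge set of `G - S`. -/
def edgesAvoiding {V : Type*} (G : SimpleGraph V) (S : Set V) : Set (Sym2 V) :=
  {e ∈ G.edgeSet | ∀ v ∈ S, v ∉ e}

/-- A vertex distinct from `r` but reachable from it has a neighbour strictly closer to `r`. -/
theorem exists_adj_dist_lt {V : Type*} {G : SimpleGraph V} {v r : V} (h : G.Reachable v r)
    (hne : v ≠ r) : ∃ w, G.Adj v w ∧ G.dist w r < G.dist v r := by
  obtain ⟨p, hp⟩ := h.exists_walk_length_eq_dist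
  cases p with
  | nil => exact absurd rfl hne
  | cons hadj q =>
    refine ⟨_, hadj, ?_⟩
    have := SimpleGraph.dist_le q
    rw [SimpleGraph.Walk.length_cons] at hp
    omega

/-- A finite graph has at most as many vertices as components and edges together. Choose a root in
each component; sending a root to its component and any other vertex to an edge leading towards
the root is injective. -/
theorem card_le_components_add_edges {V : Type*} [Finite V] (G : SimpleGraph V) :
    Nat.card V ≤ Nat.card G.ConnectedComponent + G.edgeSet.ncard := by
  classical
  let root : V → V := fun v => (G.connectedComponentMk v).out
  have hroot : ∀ v, G.Reachable v (root v) := fun v =>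
    (SimpleGraph.ConnectedComponent.exact (Quot.out_eq (G.connectedComponentMk v))).symm
  have hex : ∀ v, ∃ w, v ≠ root v → G.Adj v w ∧ G.dist w (root v) < G.dist v (root v) := by
    intro v
    by_cases h : v = root v
    · exact ⟨v, fun h' => absurd h h'⟩
    · obtain ⟨w, hw⟩ := exists_adj_dist_lt (hroot v) h
      exact ⟨w, fun _ => hw⟩
  choose next hnext using hex
  let f : V → G.ConnectedComponent ⊕ G.edgeSet := fun v =>
    if h : v = root v then Sum.inl (G.connectedComponentMk v)
    else Sum.inr ⟨s(v, next v), (hnext v h).1⟩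
  have hf : Function.Injective f := by
    intro a b hab
    by_cases ha : a = root a <;> by_cases hb : b = root b
    · simp only [f, dif_pos ha, dif_pos hb, Sum.inl.injEq] at hab
      rw [ha, hb]
      simp only [root, hab]
    · simp [f, dif_pos ha, dif_neg hb] at hab
    · simp [f, dif_neg ha, dif_pos hb] at hab
    · simp only [f, dif_neg ha, dif_neg hb, Sum.inr.injEq] at hab
      replace hab := Sym2.eq_iff.1 (congrArg Subtype.val hab)
      rcases hab with ⟨h, -⟩ | ⟨h1, h2⟩
      · exact h
      -- Otherwise each of `a`, `b` would be strictly closer to their common root than the other.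
      · exfalso
        have hA := hnext a ha
        have hB := hnext b hb
        have hr : root a = root b := by
          have : G.connectedComponentMk a = G.connectedComponentMk b :=
            SimpleGraph.ConnectedComponent.sound (h2 ▸ hA.1.reachable)
          simp only [root, this]
        rw [h2, hr] at hA
        rw [← h1] at hB
        omega
  have := Nat.card_le_card_of_injective f hf
  rwa [Nat.card_sum, Nat.card_coe_set_eq] at this

theorem ncard_edgeSet_induce_compl_le {V : Type*} [Finite V] (G : SimpleGraph V) (S : Set V) :
    (G.induce Sᶜ).edgeSet.ncard ≤ (edgesAvoiding G S).ncard := by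
  refine Set.ncard_le_ncard_of_injOn (Sym2.map Subtype.val) ?_
    (Sym2.map.injective Subtype.val_injective).injOn (Set.toFinite _)
  intro e he
  induction e with
  | _ a b =>
    refine ⟨he, ?_⟩
    rintro v hv hve
    rcases Sym2.mem_iff.1 hve with rfl | rfl
    · exact a.2 hv
    · exact b.2 hv

theorem ncard_incidenceSet {V : Type*} [Finite V] (G : SimpleGraph V) (v : V) :
    (G.incidenceSet v).ncard = (G.neighborSet v).ncard := by
  classical
  rw [← Nat.card_coe_set_eq, ← Nat.card_coe_set_eq]
  exact Nat.card_congr (G.incidenceSetEquivNeighborSet v)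

/-- An edge avoiding `S` avoids `U` or is incident with a vertex of `U \ S`. -/
theorem ncard_edgesAvoiding_le {V : Type*} [Finite V] [DecidableEq V] (G : SimpleGraph V)
    (S U : Finset V) :
    (edgesAvoiding G (↑S : Set V)).ncard ≤
      ∑ v ∈ U \ S, (G.neighborSet v).ncard + (edgesAvoiding G (↑U : Set V)).ncard := by
  have hsub : edgesAvoiding G (↑S : Set V) ⊆
      (⋃ v ∈ U \ S, G.incidenceSet v) ∪ edgesAvoiding G (↑U : Set V) := by
    rintro e ⟨he, hS⟩
    by_cases h : ∀ v ∈ U, v ∉ e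
    · exact Or.inr ⟨he, h⟩
    · push Not at h
      obtain ⟨v, hvU, hve⟩ := h
      refine Or.inl (Set.mem_biUnion (x := v) ?_ ⟨he, hve⟩)
      exact Finset.mem_sdiff.2 ⟨hvU, fun h => hS v h hve⟩
  refine (Set.ncard_le_ncard hsub (Set.toFinite _)).trans
    ((Set.ncard_union_le _ _).trans (Nat.add_le_add_right ?_ _))
  refine (Finset.set_ncard_biUnion_le _ _).trans ?_
  simp only [ncard_incidenceSet, le_refl]

theorem stmt_9 {V : Type*} [Fintype V] [DecidableEq V] (G : SimpleGraph V)
    (U : Finset V) (hU : ∀ u ∈ U, ∀ v ∈ U, ¬ G.Adj u v)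
    (α β : V → ℕ) (hαβ : ∀ v ∈ U, α v ≤ β v)
    (h₁ : ∀ S ⊆ U, S.Nonempty →
      ∑ v ∈ S, α v ≤ S.card + ({v : V | v ∉ S ∧ ∃ u ∈ S, G.Adj u v}).ncard - 1)
    (h₂ : ∀ S ⊆ U,
      Nat.card ((G.induce ((↑S : Set V)ᶜ)).ConnectedComponent) + S.card - 1 ≤
        ∑ v ∈ S, β v) :
    (∀ v ∈ U, α v ≤ min (β v) (G.neighborSet v).ncard) ∧
      ∑ v ∈ U, α v ≤ Fintype.card V - 1 ∧
      Fintype.card V - 1 ≤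
        (∑ v ∈ U, min (β v) (G.neighborSet v).ncard) +
          (edgesAvoiding G (↑U : Set V)).ncard := by
  have hdeg : ∀ v ∈ U, α v ≤ (G.neighborSet v).ncard := by
    intro v hv
    have h := h₁ {v} (by simpa using hv) (by simp)
    have hsub : ({w : V | w ∉ ({v} : Finset V) ∧ ∃ u ∈ ({v} : Finset V), G.Adj u w}).ncard ≤
        (G.neighborSet v).ncard := by
      refine Set.ncard_le_ncard ?_ (Set.toFinite _)
      rintro w ⟨-, u, hu, huw⟩
      rw [Finset.mem_singleton] at hu
      exact hu ▸ huw
    rw [Finset.sum_singleton, Finset.card_singleton] at h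
    omega
  refine ⟨fun v hv => le_min (hαβ v hv) (hdeg v hv), ?_, ?_⟩
  · rcases U.eq_empty_or_nonempty with rfl | hne
    · simp
    · have h := h₁ U subset_rfl hne
      have hsub : ({v : V | v ∉ U ∧ ∃ u ∈ U, G.Adj u v}).ncard ≤ Uᶜ.card := by
        rw [← Set.ncard_coe_finset]
        refine Set.ncard_le_ncard ?_ (Set.toFinite _)
        rintro w ⟨hw, -⟩
        simpa using hw
      have := Finset.card_add_card_compl U
      omega
  · let S : Finset V := U.filter fun v => β v ≤ (G.neighborSet v).ncard
    have hS : S ⊆ U := Finset.filter_subset _ _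
    have hsum : ∑ v ∈ U, min (β v) (G.neighborSet v).ncard =
        ∑ v ∈ U \ S, (G.neighborSet v).ncard + ∑ v ∈ S, β v := by
      rw [← Finset.sum_sdiff hS]
      congr 1
      · refine Finset.sum_congr rfl fun v hv => min_eq_right ?_
        simp only [S, Finset.mem_sdiff, Finset.mem_filter, not_and, not_le] at hv
        exact (hv.2 hv.1).le
      · exact Finset.sum_congr rfl fun v hv => min_eq_left (Finset.mem_filter.1 hv).2
    have hβ := h₂ S hS
    have hcard := card_le_components_add_edges (G.induce ((↑S : Set V)ᶜ))
    have hedge := ncard_edgeSet_induce_compl_le G (↑S : Set V)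
    have hinc := ncard_edgesAvoiding_le G S U
    have hV : S.card + Nat.card ↑((↑S : Set V)ᶜ) = Fintype.card V := by
      rw [Nat.card_coe_set_eq, ← Set.ncard_coe_finset S, Set.ncard_add_ncard_compl,
        Nat.card_eq_fintype_card]
    omega
end

section
/- Let G be a finite simple graph, U a stable subset of V(G), and β_v (v ∈ U) non-negative integers. For X ⊆ E(G), set B(X) = ∑_{v∈U} min{β_v, |X ∩ δ_G(v)|} + |X ∖ δ_G(U)|. If there exists X ⊆ E(G) with B(X) + |V(G)| − ω_G(E(G)∖X) ≤ |V(G)| − 2, then there exists such a set X which in addition satisfies X ⊆ δ_G(U) and: for every v ∈ U, either X ∩ δ_G(v) = ∅ or |X ∩ δ_G(v)| ≥ β_v. -/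
/-!
Deleting an edge `e` from `X` adds `e` to the graph on `E(G) \ X`, which merges at most two
components, so `|V| - ω` grows by at most one (`omegaE_le_insert`). If `e` lies outside the cut
`δ(U)`, the term `|X \ δ(U)|` drops by one; if `e ∈ δ(v)` for some `v ∈ U` with
`|X ∩ δ(v)| < β v`, the term of `v` in the sum drops by one. All other terms are monotone in `X`,
so in both cases the total does not increase. A set `X` of minimum size satisfying the inequality
therefore contains no such edge, which is precisely the required extra property.
-/


open SimpleGraph

/-- Adding one edge decreases the number of connected components by at most one. -/
lemma omegaE_le_insert {V : Type*} [Finite V] (e : Sym2 V) (S : Set (Sym2 V)) :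
    omegaE S ≤ omegaE (insert e S) + 1 := by
  classical
  induction e with
  | h a b =>
  let C : V → (fromEdgeSet S).ConnectedComponent := (fromEdgeSet S).connectedComponentMk
  -- Identifying the component of `b` with that of `a` gives a map constant along all edges of
  -- the larger graph; the components of the larger graph then hit everything but `C b`.
  let g : V → (fromEdgeSet S).ConnectedComponent := fun x => if C x = C b then C a else C x
  have hadj : ∀ x y, (fromEdgeSet (insert s(a, b) S)).Adj x y → g x = g y := by
    intro x y hxy
    rw [fromEdgeSet_adj] at hxy
    obtain ⟨hmem | hmem, hne⟩ := hxy
    · have hga : g a = C a := by simp [g]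
      have hgb : g b = C a := by simp [g]
      rcases Sym2.eq_iff.1 hmem with ⟨rfl, rfl⟩ | ⟨rfl, rfl⟩
      · rw [hga, hgb]
      · rw [hga, hgb]
    · have hC : C x = C y := ConnectedComponent.sound
        (Adj.reachable ((fromEdgeSet_adj S).2 ⟨hmem, hne⟩))
      simp only [g, hC]
  have hwalk : ∀ x y, (p : (fromEdgeSet (insert s(a, b) S)).Walk x y) → g x = g y := by
    intro x y p
    induction p with
    | nil => rfl
    | cons hxy _ ih => exact (hadj _ _ hxy).trans ih
  let k : (fromEdgeSet (insert s(a, b) S)).ConnectedComponent →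
      (fromEdgeSet S).ConnectedComponent :=
    ConnectedComponent.lift g (fun x y p _ => hwalk x y p)
  let f : Option (fromEdgeSet (insert s(a, b) S)).ConnectedComponent →
      (fromEdgeSet S).ConnectedComponent := fun o => o.elim (C b) k
  have hf : Function.Surjective f := by
    intro c
    induction c using ConnectedComponent.ind with
    | h x =>
    by_cases hx : C x = C b
    · exact ⟨none, hx.symm⟩
    · exact ⟨some ((fromEdgeSet (insert s(a, b) S)).connectedComponentMk x), if_neg hx⟩
  have hle := Nat.card_le_card_of_surjective f hf
  rwa [Finite.card_option] at hle

theorem stmt_16 {V : Type*} [Fintype V] [DecidableEq V] (G : SimpleGraph V)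
    (U : Finset V) (hU : ∀ u ∈ U, ∀ v ∈ U, ¬ G.Adj u v) (β : V → ℕ)
    (h : ∃ X ⊆ G.edgeSet,
      ((∑ v ∈ U, min (β v) (X ∩ G.incidenceSet v).ncard) +
          (X \ cutSet G (↑U : Set V)).ncard) +
        (Fintype.card V - omegaE (G.edgeSet \ X)) ≤ Fintype.card V - 2) :
    ∃ X ⊆ G.edgeSet,
      (((∑ v ∈ U, min (β v) (X ∩ G.incidenceSet v).ncard) +
            (X \ cutSet G (↑U : Set V)).ncard) +
          (Fintype.card V - omegaE (G.edgeSet \ X)) ≤ Fintype.card V - 2) ∧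
        X ⊆ cutSet G (↑U : Set V) ∧
        ∀ v ∈ U, X ∩ G.incidenceSet v = ∅ ∨ β v ≤ (X ∩ G.incidenceSet v).ncard := by
  classical
  let B : Set (Sym2 V) → ℕ := fun X =>
    (∑ v ∈ U, min (β v) (X ∩ G.incidenceSet v).ncard) + (X \ cutSet G (↑U : Set V)).ncard
  let P : Set (Sym2 V) → Prop := fun X => X ⊆ G.edgeSet ∧
    B X + (Fintype.card V - omegaE (G.edgeSet \ X)) ≤ Fintype.card V - 2
  obtain ⟨X, ⟨hXE, hX⟩, hmin⟩ : ∃ X, P X ∧ ∀ Y, P Y → X.ncard ≤ Y.ncard := by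
    have hP : {X | P X}.Nonempty := h
    obtain ⟨X, hX, hm⟩ := Set.exists_min_image {X | P X} Set.ncard (Set.toFinite _) hP
    exact ⟨X, hX, hm⟩
  -- By minimality, deleting an edge of `X` never lowers `B`.
  have key : ∀ e ∈ X, ¬ B (X \ {e}) + 1 ≤ B X := by
    intro e he hB
    have hset : G.edgeSet \ (X \ {e}) = insert e (G.edgeSet \ X) := by
      ext x
      by_cases hx : x = e
      · subst hx; simp [hXE he]
      · simp [hx]
    have hω := omegaE_le_insert e (G.edgeSet \ X)
    rw [← hset] at hω
    have hlt : (X \ {e}).ncard < X.ncard := Set.ncard_sdiff_singleton_lt_of_mem he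
    have hge := hmin (X \ {e}) ⟨Set.sdiff_subset.trans hXE, by omega⟩
    omega
  have hterm : ∀ e v, min (β v) ((X \ {e}) ∩ G.incidenceSet v).ncard ≤
      min (β v) (X ∩ G.incidenceSet v).ncard := fun e v =>
    min_le_min_left _ (Set.ncard_le_ncard
      (Set.inter_subset_inter_left _ Set.sdiff_subset) (Set.toFinite _))
  refine ⟨X, hXE, hX, ?_, ?_⟩
  · intro e he
    by_contra hc
    apply key e he
    have hsum := Finset.sum_le_sum (s := U) (fun v _ => hterm e v)
    have hlt : ((X \ {e}) \ cutSet G (↑U : Set V)).ncard <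
        (X \ cutSet G (↑U : Set V)).ncard := by
      rw [Set.sdiff_sdiff_comm]
      exact Set.ncard_sdiff_singleton_lt_of_mem ⟨he, hc⟩
    simp only [B]
    omega
  · intro v hv
    by_contra! hcon
    obtain ⟨⟨e, heX, hev⟩, hβ⟩ := hcon
    apply key e heX
    have hlt : ((X \ {e}) ∩ G.incidenceSet v).ncard < (X ∩ G.incidenceSet v).ncard := by
      rw [← Set.inter_sdiff_right_comm]
      exact Set.ncard_sdiff_singleton_lt_of_mem ⟨heX, hev⟩
    have hsum := Finset.sum_lt_sum (s := U) (fun w _ => hterm e w)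
      ⟨v, hv, by omega⟩
    have hle : ((X \ {e}) \ cutSet G (↑U : Set V)).ncard ≤
        (X \ cutSet G (↑U : Set V)).ncard :=
      Set.ncard_le_ncard (Set.sdiff_subset_sdiff_left Set.sdiff_subset) (Set.toFinite _)
    simp only [B]
    omega
end

section
/- Let G be a finite simple graph, U a stable subset of V(G), α_v, β_v (v ∈ U) non-negative integers, and T a spanning tree of G with α_v ≤ d_T(v) ≤ β_v for all v ∈ U. Then for every non-empty S ⊆ U, ∑_{v∈S} α_v ≤ |V(G)| − ω_G(δ_G(S)). -/
/-! The edges of `T` incident to `S` all lie in the cut of `S` in `G`, because `S` is stable, and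
no edge is incident to two vertices of `S`; so there are `∑ v ∈ S, d_T(v)` of them. They form a
forest, and a forest with `m` edges has at most `|V| - m` components
(`card_add_card_connectedComponent_le`). Enlarging the edge set to the whole cut can only decrease
the number of components. -/

open SimpleGraph

/-- Each edge of an acyclic graph is a bridge, hence adding it to a set of other edges merges
two components. -/
lemma card_add_card_connectedComponent_le {V : Type*} [Fintype V] [DecidableEq V]
    {T : SimpleGraph V} (hT : T.IsAcyclic) (s : Finset (Sym2 V))
    (hs : (↑s : Set (Sym2 V)) ⊆ T.edgeSet) :
    s.card + Nat.card (fromEdgeSet (↑s : Set (Sym2 V))).ConnectedComponent ≤ Fintype.card V := by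
  induction s using Finset.induction_on with
  | empty =>
    rw [Finset.card_empty, zero_add, ← Nat.card_eq_fintype_card]
    exact Nat.card_le_card_of_surjective _ Quot.mk_surjective
  | insert e s he ih =>
    have ih' := ih fun x hx => hs (by simpa using Or.inr hx)
    have heT : e ∈ T.edgeSet := hs (by simp)
    have hle : fromEdgeSet (↑s : Set (Sym2 V)) ≤ fromEdgeSet (↑(insert e s) : Set (Sym2 V)) :=
      fromEdgeSet_mono (by simp)
    -- Were the number of components unchanged, this surjection would be injective, so the ends of
    -- `e` would already be joined by the edges in `s`, although `e` is a bridge of `T`.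
    have hsurj := ConnectedComponent.surjective_map_ofLE hle
    have hlt : Nat.card (fromEdgeSet (↑(insert e s) : Set (Sym2 V))).ConnectedComponent
        < Nat.card (fromEdgeSet (↑s : Set (Sym2 V))).ConnectedComponent := by
      refine lt_of_le_of_ne (Nat.card_le_card_of_surjective _ hsurj) fun heq => ?_
      have hinj := ((Nat.bijective_iff_surjective_and_card _).2 ⟨hsurj, heq.symm⟩).injective
      induction e using Sym2.ind with
      | _ u v =>
      have hadj : T.Adj u v := heT
      have h1 : (fromEdgeSet (↑(insert s(u, v) s) : Set (Sym2 V))).Reachable u v :=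
        Adj.reachable (by simp [hadj.ne])
      have h2 : (fromEdgeSet (↑s : Set (Sym2 V))).Reachable u v :=
        ConnectedComponent.exact (hinj (ConnectedComponent.sound h1))
      have hb := isAcyclic_iff_forall_adj_isBridge.1 hT hadj
      rw [isBridge_iff] at hb
      refine hb (h2.mono fun a b hab => ?_)
      rw [fromEdgeSet_adj] at hab
      have habT : T.Adj a b := hs (by simpa using Or.inr hab.1)
      rw [deleteEdges_adj]
      refine ⟨habT, fun h => he ?_⟩
      rw [← Set.mem_singleton_iff.1 h]
      exact hab.1
    rw [Finset.card_insert_of_notMem he]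
    omega

theorem stmt_18 {V : Type*} [Fintype V] [DecidableEq V] (G : SimpleGraph V)
    (U : Finset V) (hU : ∀ u ∈ U, ∀ v ∈ U, ¬ G.Adj u v) (α β : V → ℕ)
    (T : SimpleGraph V) (hTG : T ≤ G) (hT : T.IsTree)
    (hdeg : ∀ v ∈ U, α v ≤ (T.neighborSet v).ncard ∧ (T.neighborSet v).ncard ≤ β v) :
    ∀ S ⊆ U, S.Nonempty →
      ∑ v ∈ S, α v ≤ Fintype.card V - omegaE (cutSet G (↑S : Set V)) := by
  classical
  intro S hSU _
  have hstable : ∀ u ∈ S, ∀ v ∈ S, ¬ T.Adj u v :=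
    fun u hu v hv h => hU u (hSU hu) v (hSU hv) (hTG h)
  have hdisj : (↑S : Set V).PairwiseDisjoint fun v => T.incidenceFinset v := by
    intro u hu v hv huv
    rw [Function.onFun, Finset.disjoint_left]
    intro e heu hev
    rw [mem_incidenceFinset] at heu hev
    exact hstable u hu v hv (T.adj_of_mem_incidenceSet huv heu hev)
  have hsT : (↑(S.biUnion fun v => T.incidenceFinset v) : Set (Sym2 V)) ⊆ T.edgeSet := by
    intro e he
    simp only [Finset.coe_biUnion, Set.mem_iUnion, Finset.mem_coe, mem_incidenceFinset] at he
    obtain ⟨v, -, hv⟩ := he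
    exact hv.1
  have hcut : (↑(S.biUnion fun v => T.incidenceFinset v) : Set (Sym2 V)) ⊆ cutSet G ↑S := by
    intro e he
    simp only [Finset.coe_biUnion, Set.mem_iUnion, Finset.mem_coe, mem_incidenceFinset] at he
    obtain ⟨v, hvS, heT, hve⟩ := he
    obtain ⟨w, rfl⟩ := hve
    exact ⟨hTG heT, v, w, rfl, hvS, fun hw => hstable v hvS w hw heT⟩
  have hsum : ∑ v ∈ S, α v ≤ (S.biUnion fun v => T.incidenceFinset v).card := by
    rw [Finset.card_biUnion hdisj]
    refine Finset.sum_le_sum fun v hv => (hdeg v (hSU hv)).1.trans ?_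
    rw [card_incidenceFinset_eq_degree, ← card_neighborSet_eq_degree, Set.ncard_eq_toFinset_card',
      Set.toFinset_card]
  have hforest := card_add_card_connectedComponent_le hT.isAcyclic _ hsT
  have hmono : omegaE (cutSet G ↑S) ≤ _ :=
    ConnectedComponent.card_le_card_of_le (fromEdgeSet_mono hcut)
  omega
end
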